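/- Let 0 < b < 1/2, ε > 0, A > 0, and a ≥ 0. Let K_a : ℝ² → ℂ be measurable and satisfy |K_a(λ,μ)| ≤ (A/⟨a+iμ⟩) · min( 1/⟨λ⟩ + 1/⟨λ−μ⟩ , ⟨a⟩/⟨λ⟩² + ⟨a⟩/⟨λ−μ⟩² ) for all (λ,μ) ∈ ℝ². Then there is a constant C = C(b,ε) > 0, independent of a and A, such that for every measurable g : ℝ → ℂ with ‖⟨μ⟩^{ε} g(μ)‖_{L²_μ} < ∞, one has ‖⟨λ⟩^{b} ∫_ℝ K_a(λ,μ) g(μ) dμ‖_{L²_λ} ≤ C · A · ⟨a⟩^{−1/2} · ‖⟨μ⟩^{ε} g(μ)‖_{L²_μ}. -/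

import Mathlib

/-!
The proof dominates the weighted kernel `⟨λ⟩^b |K(λ, μ)|` by `2A` times a sum of three positive
kernels, each bounded on `L²` with norm `O(⟨a⟩^{-1/2})`.

The minimum is controlled by the larger of `1/⟨λ⟩` and `1/⟨λ-μ⟩`. If it is `1/⟨λ⟩`, one gets the
rank-one kernel `⟨λ⟩^{b-1} / ⟨a+iμ⟩`. If it is `1/⟨λ-μ⟩`, one splits `⟨λ⟩^b ≤ ⟨λ-μ⟩^b + ⟨μ⟩^b`: the
first part gives `⟨λ-μ⟩^{b-1} / ⟨a+iμ⟩`; in the second, `⟨μ⟩^b / ⟨a+iμ⟩ ≤ ⟨a⟩^{b-1}` is combined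
with the interpolation `min (y, ⟨a⟩ y²) ≤ ⟨a⟩^{1/2-b} y^{3/2-b}`, `y = 1/⟨λ-μ⟩`, which leaves
`⟨a⟩^{-1/2} ⟨λ-μ⟩^{-(3/2-b)}` (`weighted_kernel_le`). Each of the three is handled by the
same Schur test (`lintegral_kernel_sq_le`), using `∫ ⟨a+iμ⟩⁻² dμ = π/⟨a⟩` and the integrability of
`⟨x⟩^{2b-2}` and `⟨x⟩^{-(3/2-b)}`, both of which hold because `b < 1/2`.
-/

noncomputable section

open MeasureTheory
open scoped ENNReal

/-- Japanese bracket of a real number: `⟨x⟩ = (1 + x²)^{1/2}`. -/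
def jb (x : ℝ) : ℝ := Real.sqrt (1 + x ^ 2)

/-- `⟨a + iμ⟩ = (1 + a² + μ²)^{1/2}`. -/
def jbC (a μ : ℝ) : ℝ := Real.sqrt (1 + a ^ 2 + μ ^ 2)

/-- The kernel bound hypothesis of Lemma 3.5:
`|K_a(λ,μ)| ≤ (A/⟨a+iμ⟩) min( ⟨λ⟩⁻¹ + ⟨λ-μ⟩⁻¹ , ⟨a⟩⟨λ⟩⁻² + ⟨a⟩⟨λ-μ⟩⁻² )`. -/
def KernelBound (A a : ℝ) (K : ℝ → ℝ → ℂ) : Prop :=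
  ∀ l μ : ℝ, ‖K l μ‖ ≤ A / jbC a μ *
    min (1 / jb l + 1 / jb (l - μ)) (jb a / jb l ^ 2 + jb a / jb (l - μ) ^ 2)

theorem jb_sq (x : ℝ) : jb x ^ 2 = 1 + x ^ 2 := Real.sq_sqrt (by positivity)

theorem jb_pos (x : ℝ) : 0 < jb x := Real.sqrt_pos.2 (by positivity)

theorem one_le_jb (x : ℝ) : 1 ≤ jb x := Real.one_le_sqrt.2 (by nlinarith [sq_nonneg x])

theorem jbC_sq (a x : ℝ) : jbC a x ^ 2 = jb a ^ 2 + x ^ 2 := by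
  rw [jb_sq]; exact Real.sq_sqrt (by positivity)

theorem jbC_pos (a x : ℝ) : 0 < jbC a x := Real.sqrt_pos.2 (by positivity)

theorem jb_le_jbC (a x : ℝ) : jb a ≤ jbC a x :=
  Real.sqrt_le_sqrt (by nlinarith [sq_nonneg x])

theorem jb_le_jbC' (a x : ℝ) : jb x ≤ jbC a x :=
  Real.sqrt_le_sqrt (by nlinarith [sq_nonneg a])

/-- Subadditivity of the bracket; after squaring, it follows from `|(l - m) m| ≤ ⟨l - m⟩⟨m⟩`. -/
theorem jb_le_add (l m : ℝ) : jb l ≤ jb (l - m) + jb m := by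
  have h1 := jb_sq (l - m)
  have h2 := jb_sq m
  have p1 := jb_pos (l - m)
  have p2 := jb_pos m
  have hm : |(l - m) * m| ≤ jb (l - m) * jb m := by
    rw [abs_mul]
    exact mul_le_mul (Real.abs_le_sqrt (by linarith)) (Real.abs_le_sqrt (by linarith))
      (abs_nonneg _) p1.le
  refine Real.sqrt_le_iff.2 ⟨by positivity, ?_⟩
  nlinarith [le_abs_self ((l - m) * m)]

@[fun_prop]
theorem continuous_jb : Continuous jb := by unfold jb; fun_prop

@[fun_prop]
theorem continuous_jbC (a : ℝ) : Continuous (jbC a) := by unfold jbC; fun_prop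

theorem lintegral_jb_rpow_lt_top {r : ℝ} (hr : 1 < r) :
    ∫⁻ x : ℝ, ENNReal.ofReal (jb x ^ (-r)) < ⊤ := by
  have h := integrable_rpow_neg_one_add_norm_sq (E := ℝ) (μ := volume) (r := r) (by simpa using hr)
  have e : (fun x : ℝ => jb x ^ (-r)) = fun x : ℝ => (1 + ‖x‖ ^ 2) ^ (-r / 2) := by
    funext x
    rw [jb, Real.sqrt_eq_rpow, ← Real.rpow_mul (by positivity), Real.norm_eq_abs, sq_abs]
    congr 1; ring
  rw [← e] at h
  exact h.lintegral_lt_top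

/-- `∫ ⟨a + im⟩⁻² dm = π / ⟨a⟩`, by scaling `m = ⟨a⟩ s`. This is where the gain `⟨a⟩^{-1/2}` in the
operator norm comes from for the first two kernels. -/
theorem lintegral_inv_jbC_sq (a : ℝ) :
    ∫⁻ m : ℝ, ENNReal.ofReal (1 / jbC a m) ^ 2 = ENNReal.ofReal (Real.pi / jb a) := by
  have hp := jb_pos a
  have e : ∀ m : ℝ, ENNReal.ofReal (1 / jbC a m) ^ 2
      = ENNReal.ofReal ((jb a ^ 2)⁻¹ * (1 + ((jb a)⁻¹ * m) ^ 2)⁻¹) := by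
    intro m
    rw [← ENNReal.ofReal_pow (by have := jbC_pos a m; positivity)]
    congr 1
    rw [div_pow, jbC_sq]
    field_simp
  simp_rw [e]
  rw [← ofReal_integral_eq_lintegral_ofReal
    ((integrable_inv_one_add_sq.comp_mul_left' (inv_ne_zero hp.ne')).const_mul _)
    (Filter.Eventually.of_forall fun m => by positivity)]
  rw [integral_const_mul, Measure.integral_comp_mul_left (fun x : ℝ => (1 + x ^ 2)⁻¹),
    integral_univ_inv_one_add_sq, inv_inv, abs_of_pos hp, smul_eq_mul]
  congr 1
  field_simp

/-- Schur test for a factored kernel `u v`: if `‖v(l, ·)‖²_{L²} ≤ α` for all `l` and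
`‖u(·, m)‖²_{L²} ≤ β` for all `m`, the operator with kernel `u v` has `L²` norm at most `(αβ)^{1/2}`.
Cauchy–Schwarz in `m`, then Tonelli. -/
theorem lintegral_kernel_sq_le (u v : ℝ → ℝ → ℝ≥0∞) (F : ℝ → ℝ≥0∞) (α β : ℝ≥0∞)
    (hu : Measurable (Function.uncurry u)) (hv : Measurable (Function.uncurry v))
    (hF : Measurable F) (hα : ∀ l, ∫⁻ m, v l m ^ 2 ≤ α) (hβ : ∀ m, ∫⁻ l, u l m ^ 2 ≤ β) :
    ∫⁻ l, (∫⁻ m, u l m * v l m * F m) ^ 2 ≤ α * β * ∫⁻ m, F m ^ 2 := by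
  have hul : ∀ l, Measurable (u l) := fun l => hu.comp measurable_prodMk_left
  have hvl : ∀ l, Measurable (v l) := fun l => hv.comp measurable_prodMk_left
  have hum : ∀ m, Measurable fun l => u l m := fun m => hu.comp measurable_prodMk_right
  have cs : ∀ l, (∫⁻ m, u l m * v l m * F m) ^ 2 ≤ α * ∫⁻ m, u l m ^ 2 * F m ^ 2 := by
    intro l
    have h := ENNReal.lintegral_mul_le_Lp_mul_Lq volume Real.HolderConjugate.two_two
      (hvl l).aemeasurable ((hul l).mul hF).aemeasurable
    have sq : ∀ x : ℝ≥0∞, (x ^ ((1 : ℝ) / 2)) ^ 2 = x := fun x => by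
      rw [← ENNReal.rpow_two, ← ENNReal.rpow_mul]; norm_num
    calc (∫⁻ m, u l m * v l m * F m) ^ 2
        = (∫⁻ m, (v l * (u l * F)) m) ^ 2 := by
          congr 2; funext m; simp only [Pi.mul_apply]; ring
      _ ≤ _ := pow_le_pow_left' h 2
      _ = (∫⁻ m, v l m ^ 2) * ∫⁻ m, u l m ^ 2 * F m ^ 2 := by
          rw [mul_pow, sq, sq]
          simp only [ENNReal.rpow_two, Pi.mul_apply, mul_pow]
      _ ≤ _ := by gcongr; exact hα l
  calc _ ≤ ∫⁻ l, α * ∫⁻ m, u l m ^ 2 * F m ^ 2 := lintegral_mono cs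
    _ = α * ∫⁻ l, ∫⁻ m, u l m ^ 2 * F m ^ 2 := by
        refine lintegral_const_mul _ (Measurable.lintegral_prod_right' (f := fun z : ℝ × ℝ =>
          u z.1 z.2 ^ 2 * F z.2 ^ 2) ?_)
        exact (hu.pow_const 2).mul ((hF.comp measurable_snd).pow_const 2)
    _ = α * ∫⁻ m, ∫⁻ l, u l m ^ 2 * F m ^ 2 := by
        rw [lintegral_lintegral_swap]
        exact ((hu.pow_const 2).mul ((hF.comp measurable_snd).pow_const 2)).aemeasurable
    _ ≤ α * ∫⁻ m, β * F m ^ 2 := by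
        gcongr with m
        rw [lintegral_mul_const _ ((hum m).pow_const 2)]
        gcongr
        exact hβ m
    _ = _ := by rw [lintegral_const_mul _ (hF.pow_const 2), mul_assoc]

/-- The weighted kernel is dominated by a rank-one kernel, a kernel with factor `⟨l - m⟩^{b-1}`, and
`⟨a⟩^{-1/2}` times an integrable convolution kernel. -/
theorem weighted_kernel_le {b a : ℝ} (hb0 : 0 < b) (hb : b < 1 / 2) (l m : ℝ) :
    jb l ^ b * (1 / jbC a m *
      min (1 / jb l + 1 / jb (l - m)) (jb a / jb l ^ 2 + jb a / jb (l - m) ^ 2)) ≤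
    2 * (jb l ^ (b - 1) * (1 / jbC a m) + jb (l - m) ^ (b - 1) * (1 / jbC a m)
      + jb a ^ (-(1 : ℝ) / 2) * jb (l - m) ^ (-(3 / 2 - b))) := by
  have hx := jb_pos l
  have hy := jb_pos (l - m)
  have hm := jb_pos m
  have hR := jb_pos a
  have hp := jbC_pos a m
  have hx1 := Real.rpow_sub_one hx.ne' b
  have hy1 := Real.rpow_sub_one hy.ne' b
  have hadd := jb_le_add l m
  have hRp := jb_le_jbC a m
  have hmp := jb_le_jbC' a m
  generalize jb l = x at *
  generalize jb (l - m) = y at *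
  generalize jb m = z at *
  generalize jb a = R at *
  generalize jbC a m = p at *
  -- below `x = ⟨l⟩`, `y = ⟨l - m⟩`, `z = ⟨m⟩`, `R = ⟨a⟩`, `p = ⟨a + im⟩`
  rcases le_total x y with hxy | hxy
  · have h1 : min (1 / x + 1 / y) (R / x ^ 2 + R / y ^ 2) ≤ 2 * (1 / x) :=
      (min_le_left _ _).trans (by linarith [one_div_le_one_div_of_le hx hxy])
    calc _ ≤ x ^ b * (1 / p * (2 * (1 / x))) := by gcongr
      _ = 2 * (x ^ (b - 1) * (1 / p)) := by rw [hx1]; field_simp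
      _ ≤ _ := by
        have : 0 ≤ y ^ (b - 1) * (1 / p) := by positivity
        have : 0 ≤ R ^ (-(1 : ℝ) / 2) * y ^ (-(3 / 2 - b)) := by positivity
        linarith
  · have h1 : min (1 / x + 1 / y) (R / x ^ 2 + R / y ^ 2) ≤ 2 * (1 / y) :=
      (min_le_left _ _).trans (by linarith [one_div_le_one_div_of_le hy hxy])
    have h2 : min (1 / x + 1 / y) (R / x ^ 2 + R / y ^ 2) ≤ 2 * (R / y ^ 2) := by
      refine (min_le_right _ _).trans ?_
      have : R / x ^ 2 ≤ R / y ^ 2 := by gcongr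
      linarith
    have hM : 0 < min (1 / x + 1 / y) (R / x ^ 2 + R / y ^ 2) := by positivity
    generalize min (1 / x + 1 / y) (R / x ^ 2 + R / y ^ 2) = M at *
    -- geometric interpolation of the two bounds with weight `1/2 - b` on the second
    have h3 : M ≤ 2 * (R ^ (1 / 2 - b) * y ^ (-(3 / 2 - b))) := by
      calc M = M ^ (1 / 2 + b) * M ^ (1 / 2 - b) := by
            rw [← Real.rpow_add hM]; norm_num
        _ ≤ (2 * (1 / y)) ^ (1 / 2 + b) * (2 * (R / y ^ 2)) ^ (1 / 2 - b) := by
            gcongr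
        _ = _ := by
            rw [Real.mul_rpow (by norm_num) (by positivity),
              Real.mul_rpow (by norm_num) (by positivity), Real.div_rpow hR.le (by positivity),
              one_div y, ← Real.rpow_neg_one y, ← Real.rpow_mul hy.le, ← Real.rpow_natCast,
              ← Real.rpow_mul hy.le, div_eq_mul_inv (R ^ _), ← Real.rpow_neg hy.le]
            calc _ = ((2 : ℝ) ^ (1 / 2 + b) * 2 ^ (1 / 2 - b)) * (R ^ (1 / 2 - b) *
                  (y ^ (-1 * (1 / 2 + b)) * y ^ (-(((2 : ℕ) : ℝ) * (1 / 2 - b))))) := by ring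
              _ = _ := by
                rw [← Real.rpow_add (by norm_num), ← Real.rpow_add hy]
                congr 1
                · norm_num
                · congr 2; push_cast; ring
    have h4 : x ^ b ≤ y ^ b + z ^ b :=
      (Real.rpow_le_rpow hx.le hadd hb0.le).trans
        (Real.rpow_add_le_add_rpow hy.le hm.le hb0.le (by linarith))
    have h5 : z ^ b * (1 / p) ≤ R ^ (b - 1) := by
      calc z ^ b * (1 / p) ≤ p ^ b * (1 / p) := by gcongr
        _ = p ^ (b - 1) := by rw [Real.rpow_sub_one hp.ne']; ring
        _ ≤ R ^ (b - 1) := Real.rpow_le_rpow_of_nonpos hR hRp (by linarith)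
    calc x ^ b * (1 / p * M) ≤ (y ^ b + z ^ b) * (1 / p * M) := by gcongr
      _ = y ^ b * (1 / p) * M + z ^ b * (1 / p) * M := by ring
      _ ≤ y ^ b * (1 / p) * (2 * (1 / y))
          + R ^ (b - 1) * (2 * (R ^ (1 / 2 - b) * y ^ (-(3 / 2 - b)))) := by gcongr
      _ = 2 * (y ^ (b - 1) * (1 / p)
          + (R ^ (b - 1) * R ^ (1 / 2 - b)) * y ^ (-(3 / 2 - b))) := by rw [hy1]; ring
      _ = 2 * (y ^ (b - 1) * (1 / p) + R ^ (-(1 : ℝ) / 2) * y ^ (-(3 / 2 - b))) := by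
          rw [← Real.rpow_add hR]; congr 4; ring
      _ ≤ _ := by
        have : 0 ≤ x ^ (b - 1) * (1 / p) := by positivity
        linarith

theorem add_add_sq_le (x y z : ℝ≥0∞) : (x + y + z) ^ 2 ≤ 4 * (x ^ 2 + y ^ 2 + z ^ 2) := by
  have key : ∀ p q : ℝ≥0∞, (p + q) ^ 2 ≤ 2 * (p ^ 2 + q ^ 2) := fun p q => by
    have h := ENNReal.rpow_add_le_mul_rpow_add_rpow p q (p := 2) (by norm_num)
    norm_num at h
    exact h
  calc (x + y + z) ^ 2 ≤ 2 * ((x + y) ^ 2 + z ^ 2) := key _ _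
    _ ≤ 2 * (2 * (x ^ 2 + y ^ 2) + 2 * z ^ 2) := by
        gcongr
        · exact key x y
        · rw [two_mul]; exact le_self_add
    _ = _ := by ring

/-- Pointwise in `l`, the weighted integral is at most the positive integral with the three-term
majorant; the convolution kernel is split as a product of two equal factors so that the Schur test
applies. The weight `⟨m⟩^ε ≥ 1` is inserted for free. -/
theorem weighted_integral_le {b ε : ℝ} (hb0 : 0 < b) (hb : b < 1 / 2) (hε : 0 < ε) {A a : ℝ}
    (hA : 0 < A) {K : ℝ → ℝ → ℂ} (hK : KernelBound A a K) (g : ℝ → ℂ) (l : ℝ) :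
    ENNReal.ofReal (jb l ^ b * ‖∫ m : ℝ, K l m * g m‖) ≤
    ∫⁻ m, ENNReal.ofReal (2 * A) *
      ((ENNReal.ofReal (jb l ^ (b - 1)) * ENNReal.ofReal (1 / jbC a m)
        + ENNReal.ofReal (jb (l - m) ^ (b - 1)) * ENNReal.ofReal (1 / jbC a m)
        + ENNReal.ofReal (jb a ^ (-(1 : ℝ) / 2)) *
          (ENNReal.ofReal (jb (l - m) ^ (-(3 / 2 - b) / 2)) *
            ENNReal.ofReal (jb (l - m) ^ (-(3 / 2 - b) / 2))))
        * ENNReal.ofReal (jb m ^ ε * ‖g m‖)) := by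
  have hl : 0 ≤ jb l ^ b := Real.rpow_nonneg (jb_pos l).le _
  rw [ENNReal.ofReal_mul hl, ofReal_norm]
  calc _ ≤ ENNReal.ofReal (jb l ^ b) * ∫⁻ m, ‖K l m * g m‖ₑ := by
        gcongr; exact enorm_integral_le_lintegral_enorm _
    _ = ∫⁻ m, ENNReal.ofReal (jb l ^ b) * ‖K l m * g m‖ₑ :=
        (lintegral_const_mul' _ _ ENNReal.ofReal_ne_top).symm
    _ ≤ _ := by
      refine lintegral_mono fun m => ?_
      have p1 := jb_pos l
      have p2 := jb_pos (l - m)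
      have p3 := jb_pos m
      have p4 := jb_pos a
      have p5 := jbC_pos a m
      rw [← ofReal_norm, ← ENNReal.ofReal_mul hl, ← ENNReal.ofReal_mul (by positivity),
        ← ENNReal.ofReal_mul (by positivity), ← ENNReal.ofReal_mul (by positivity),
        ← ENNReal.ofReal_mul (by positivity), ← ENNReal.ofReal_add (by positivity) (by positivity),
        ← ENNReal.ofReal_add (by positivity) (by positivity),
        ← ENNReal.ofReal_mul (by positivity), ← ENNReal.ofReal_mul (by positivity),
        ← Real.rpow_add p2, add_halves]
      refine ENNReal.ofReal_le_ofReal ?_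
      rw [norm_mul]
      have hg : ‖g m‖ ≤ jb m ^ ε * ‖g m‖ :=
        le_mul_of_one_le_left (norm_nonneg _) (Real.one_le_rpow (one_le_jb m) hε.le)
      have hw := weighted_kernel_le hb0 hb (a := a) l m
      calc jb l ^ b * (‖K l m‖ * ‖g m‖)
          ≤ jb l ^ b * ((A / jbC a m * min (1 / jb l + 1 / jb (l - m))
              (jb a / jb l ^ 2 + jb a / jb (l - m) ^ 2)) * (jb m ^ ε * ‖g m‖)) := by
            gcongr
            exact hK l m
        _ = A * (jb l ^ b * (1 / jbC a m * min (1 / jb l + 1 / jb (l - m))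
              (jb a / jb l ^ 2 + jb a / jb (l - m) ^ 2))) * (jb m ^ ε * ‖g m‖) := by ring
        _ ≤ A * _ * (jb m ^ ε * ‖g m‖) :=
            mul_le_mul_of_nonneg_right (mul_le_mul_of_nonneg_left hw hA.le) (by positivity)
        _ = _ := by ring

theorem ofReal_jb_rpow_sq (x r : ℝ) :
    ENNReal.ofReal (jb x ^ r) ^ 2 = ENNReal.ofReal (jb x ^ (2 * r)) := by
  have := jb_pos x
  rw [← ENNReal.ofReal_pow (by positivity), ← Real.rpow_mul_natCast this.le]
  congr 2; push_cast; ring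

/-- Lemma 3.5 (ii): under the kernel bound, `T_a` maps `H^{ε}(ℝ)` to `H^{b}(ℝ)` with
operator norm `≲ A ⟨a⟩^{-1/2}`, for `0 < b < 1/2` and `ε > 0`, uniformly in `a ≥ 0` and `A`. -/
theorem kernel_bound_ii (b ε : ℝ) (hb0 : 0 < b) (hb : b < 1 / 2) (hε : 0 < ε) :
    ∃ C > (0 : ℝ), ∀ A : ℝ, 0 < A → ∀ a : ℝ, 0 ≤ a →
      ∀ K : ℝ → ℝ → ℂ, Measurable (Function.uncurry K) → KernelBound A a K →
      ∀ g : ℝ → ℂ, Measurable g →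
        (∫⁻ μ : ℝ, ENNReal.ofReal ((jb μ ^ ε * ‖g μ‖) ^ 2)) < ⊤ →
        (∫⁻ l : ℝ, ENNReal.ofReal ((jb l ^ b * ‖∫ μ : ℝ, K l μ * g μ‖) ^ 2)) ^ ((1 : ℝ) / 2)
          ≤ ENNReal.ofReal (C * A * jb a ^ (-(1 : ℝ) / 2)) *
            (∫⁻ μ : ℝ, ENNReal.ofReal ((jb μ ^ ε * ‖g μ‖) ^ 2)) ^ ((1 : ℝ) / 2) := by
  obtain ⟨B, hB⟩ : ∃ B : NNReal, (B : ℝ≥0∞) = ∫⁻ x : ℝ, ENNReal.ofReal (jb x ^ (-(2 - 2 * b))) :=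
    ⟨_, ENNReal.coe_toNNReal (lintegral_jb_rpow_lt_top (by linarith)).ne⟩
  obtain ⟨W, hW⟩ : ∃ W : NNReal, (W : ℝ≥0∞) = ∫⁻ x : ℝ, ENNReal.ofReal (jb x ^ (-(3 / 2 - b))) :=
    ⟨_, ENNReal.coe_toNNReal (lintegral_jb_rpow_lt_top (by linarith)).ne⟩
  have hD : 0 < 16 * (2 * Real.pi * B + W ^ 2) + 1 := by positivity
  refine ⟨√(16 * (2 * Real.pi * B + W ^ 2) + 1), Real.sqrt_pos.2 hD, ?_⟩
  intro A hA a _ K _ hK g hg _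
  have hR := jb_pos a
  have mjb : ∀ r : ℝ, Measurable fun x : ℝ => ENNReal.ofReal (jb x ^ r) := fun r =>
    (continuous_jb.measurable.pow_const r).ennreal_ofReal
  set F : ℝ → ℝ≥0∞ := fun m => ENNReal.ofReal (jb m ^ ε * ‖g m‖) with hFdef
  have hF : Measurable F :=
    ((continuous_jb.measurable.pow_const ε).mul hg.norm).ennreal_ofReal
  set p : ℝ → ℝ≥0∞ := fun m => ENNReal.ofReal (1 / jbC a m) with hpdef
  have hp : Measurable p := ((continuous_jbC a).measurable.const_div 1).ennreal_ofReal
  set u : ℝ → ℝ≥0∞ := fun x => ENNReal.ofReal (jb x ^ (b - 1)) with hudef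
  have hu : Measurable u := mjb _
  set w : ℝ → ℝ≥0∞ := fun x => ENNReal.ofReal (jb x ^ (-(3 / 2 - b) / 2)) with hwdef
  have hw : Measurable w := mjb _
  have hu2 : ∫⁻ x, u x ^ 2 = B := by
    rw [hB]; refine lintegral_congr fun x => ?_
    rw [hudef]; dsimp only; rw [ofReal_jb_rpow_sq]; congr 2; ring
  have hw2 : ∫⁻ x, w x ^ 2 = W := by
    rw [hW]; refine lintegral_congr fun x => ?_
    rw [hwdef]; dsimp only; rw [ofReal_jb_rpow_sq]; congr 2; ring
  have hp2 : ∫⁻ x, p x ^ 2 = ENNReal.ofReal (Real.pi / jb a) := lintegral_inv_jbC_sq a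
  have hsub : Measurable fun z : ℝ × ℝ => z.1 - z.2 := measurable_fst.sub measurable_snd
  have T1 := lintegral_kernel_sq_le (fun l _ => u l) (fun _ m => p m) F _ _
    (hu.comp measurable_fst) (hp.comp measurable_snd) hF (fun _ => hp2.le) (fun _ => hu2.le)
  have T2 := lintegral_kernel_sq_le (fun l m => u (l - m)) (fun _ m => p m) F _ _
    (hu.comp hsub) (hp.comp measurable_snd) hF (fun _ => hp2.le)
    (fun m => ((lintegral_sub_right_eq_self (fun x => u x ^ 2) m).trans hu2).le)
  have T3 := lintegral_kernel_sq_le (fun l m => w (l - m)) (fun l m => w (l - m)) F _ _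
    (hw.comp hsub) (hw.comp hsub) hF
    (fun l => ((lintegral_sub_left_eq_self (fun x => w x ^ 2) l).trans hw2).le)
    (fun m => ((lintegral_sub_right_eq_self (fun x => w x ^ 2) m).trans hw2).le)
  have m1 : Measurable fun z : ℝ × ℝ => u z.1 * p z.2 * F z.2 := by fun_prop
  have m2 : Measurable fun z : ℝ × ℝ => u (z.1 - z.2) * p z.2 * F z.2 := by fun_prop
  have hN : ∫⁻ m, ENNReal.ofReal ((jb m ^ ε * ‖g m‖) ^ 2) = ∫⁻ m, F m ^ 2 :=
    lintegral_congr fun m => ENNReal.ofReal_pow (by have := jb_pos m; positivity) 2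
  rw [hN]
  set ρ : ℝ := jb a ^ (-(1 : ℝ) / 2) with hρ
  have hρ0 : 0 < ρ := by positivity
  have hρ2 : ρ ^ 2 = 1 / jb a := by
    rw [hρ, ← Real.rpow_mul_natCast hR.le, one_div, ← Real.rpow_neg_one]
    norm_num
  have main : ∫⁻ l, ENNReal.ofReal ((jb l ^ b * ‖∫ m : ℝ, K l m * g m‖) ^ 2) ≤
      ENNReal.ofReal (√(16 * (2 * Real.pi * B + W ^ 2) + 1) * A * ρ) ^ 2 * ∫⁻ m, F m ^ 2 := by
    calc ∫⁻ l, ENNReal.ofReal ((jb l ^ b * ‖∫ m : ℝ, K l m * g m‖) ^ 2)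
        ≤ ∫⁻ l, ENNReal.ofReal (2 * A) ^ 2 * (4 * ((∫⁻ m, u l * p m * F m) ^ 2
            + (∫⁻ m, u (l - m) * p m * F m) ^ 2
            + ENNReal.ofReal ρ ^ 2 * (∫⁻ m, w (l - m) * w (l - m) * F m) ^ 2)) := by
          refine lintegral_mono fun l => ?_
          rw [ENNReal.ofReal_pow (by have := jb_pos l; positivity)]
          refine (pow_le_pow_left' (weighted_integral_le hb0 hb hε hA hK g l) 2).trans ?_
          rw [lintegral_const_mul' _ _ ENNReal.ofReal_ne_top, mul_pow]
          gcongr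
          rw [← mul_pow (ENNReal.ofReal ρ)]
          have k1 : Measurable fun m => u l * p m * F m := by fun_prop
          have k2 : Measurable fun m => u (l - m) * p m * F m := by fun_prop
          have k12 : Measurable fun m => u l * p m * F m + u (l - m) * p m * F m := k1.add k2
          refine le_trans (le_of_eq ?_) (add_add_sq_le _ _ _)
          rw [← lintegral_const_mul' _ _ ENNReal.ofReal_ne_top,
            ← lintegral_add_left k1, ← lintegral_add_left k12]
          congr 1
          refine lintegral_congr fun m => ?_
          simp only [hudef, hpdef, hwdef, hFdef]
          ring
      _ = ENNReal.ofReal (2 * A) ^ 2 * (4 * ((∫⁻ l, (∫⁻ m, u l * p m * F m) ^ 2)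
            + (∫⁻ l, (∫⁻ m, u (l - m) * p m * F m) ^ 2)
            + ENNReal.ofReal ρ ^ 2 * ∫⁻ l, (∫⁻ m, w (l - m) * w (l - m) * F m) ^ 2)) := by
          have n1 : Measurable fun l => (∫⁻ m, u l * p m * F m) ^ 2 :=
            m1.lintegral_prod_right'.pow_const 2
          have n2 : Measurable fun l => (∫⁻ m, u (l - m) * p m * F m) ^ 2 :=
            m2.lintegral_prod_right'.pow_const 2
          have n12 : Measurable fun l => (∫⁻ m, u l * p m * F m) ^ 2
              + (∫⁻ m, u (l - m) * p m * F m) ^ 2 := n1.add n2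
          rw [lintegral_const_mul' _ _ (ENNReal.pow_ne_top ENNReal.ofReal_ne_top),
            lintegral_const_mul' _ _ (by norm_num),
            lintegral_add_left n12, lintegral_add_left n1,
            lintegral_const_mul' _ _ (ENNReal.pow_ne_top ENNReal.ofReal_ne_top)]
      _ ≤ ENNReal.ofReal (2 * A) ^ 2 * (4 *
            (ENNReal.ofReal (Real.pi / jb a) * B * (∫⁻ m, F m ^ 2)
            + ENNReal.ofReal (Real.pi / jb a) * B * (∫⁻ m, F m ^ 2)
            + ENNReal.ofReal ρ ^ 2 * (W * W * ∫⁻ m, F m ^ 2))) := by gcongr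
      _ = ENNReal.ofReal ((2 * A) ^ 2 * (4 * (Real.pi / jb a * B + Real.pi / jb a * B
            + ρ ^ 2 * (W * W)))) * ∫⁻ m, F m ^ 2 := by
          rw [ENNReal.ofReal_mul (p := (2 * A) ^ 2) (by positivity),
            ENNReal.ofReal_mul (p := 4) (by positivity),
            ENNReal.ofReal_add (by positivity) (by positivity),
            ENNReal.ofReal_add (by positivity) (by positivity),
            ENNReal.ofReal_mul (p := Real.pi / jb a) (by positivity),
            ENNReal.ofReal_mul (p := ρ ^ 2) (by positivity),
            ENNReal.ofReal_mul (p := (W : ℝ)) (by positivity),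
            ENNReal.ofReal_pow (by positivity), ENNReal.ofReal_pow (by positivity),
            ENNReal.ofReal_coe_nnreal, ENNReal.ofReal_coe_nnreal, ENNReal.ofReal_ofNat]
          ring
      _ ≤ _ := by
          rw [← ENNReal.ofReal_pow (by positivity)]
          gcongr
          rw [mul_pow _ ρ, mul_pow (√_) A, Real.sq_sqrt hD.le, hρ2]
          have h0 : 0 ≤ A ^ 2 * (1 / jb a) := by positivity
          calc _ = 16 * (2 * Real.pi * B + W ^ 2) * (A ^ 2 * (1 / jb a)) := by ring
            _ ≤ _ := by nlinarith
  calc _ ≤ (ENNReal.ofReal (√(16 * (2 * Real.pi * B + W ^ 2) + 1) * A * ρ) ^ 2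
        * ∫⁻ m, F m ^ 2) ^ ((1 : ℝ) / 2) := ENNReal.rpow_le_rpow main (by norm_num)
    _ = _ := by
      rw [ENNReal.mul_rpow_of_nonneg _ _ (by norm_num), ← ENNReal.rpow_two, ← ENNReal.rpow_mul]
      norm_num
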